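/- Let μ be twice continuously differentiable on [0,1] with μ(α) = α^ν μ₁(α), where ν ≥ 0, μ₁ is continuous and μ₁(α) ≥ ρ for all α ∈ [0,1] for some ρ > 0. Let Z be the fundamental solution of the one-dimensional ultraslow diffusion equation, characterized by its Laplace transform in t. Then for every T > 0 there exists a constant ρ₀ > 0 such that Z(t,0) ≥ ρ₀ for all 0 < t ≤ T. -/

import Mathlib

open MeasureTheory Filter Set

/-- `K(p) = ∫₀¹ p^{α-1} μ(α) dα` for real `p > 0`. -/
noncomputable def Kreal (μ : ℝ → ℝ) (p : ℝ) : ℝ :=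
  ∫ α in (0:ℝ)..1, p ^ (α - 1) * μ α

/-- Complete monotonicity up to order `n` on `(0,∞)`. -/
def CMon : ℕ → (ℝ → ℝ) → Prop
  | 0, h => ∀ p : ℝ, 0 < p → 0 ≤ h p
  | n + 1, h => (∀ p : ℝ, 0 < p → 0 ≤ h p) ∧
      ∃ h' : ℝ → ℝ, (∀ p : ℝ, 0 < p → HasDerivAt h (-h' p) p) ∧ CMon n h'

theorem CMon.nonneg {n : ℕ} {h : ℝ → ℝ} (H : CMon n h) : ∀ p : ℝ, 0 < p → 0 ≤ h p := by
  cases n with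
  | zero => exact H
  | succ n => exact H.1

theorem CMon.pred : ∀ {n : ℕ} {h : ℝ → ℝ}, CMon (n + 1) h → CMon n h
  | 0, _, H => H.1
  | _ + 1, _, ⟨H0, h', H1, H2⟩ => ⟨H0, h', H1, H2.pred⟩

theorem CMon.add : ∀ {n : ℕ} {h k : ℝ → ℝ}, CMon n h → CMon n k → CMon n (fun p => h p + k p)
  | 0, _, _, H, K => fun p hp => add_nonneg (H p hp) (K p hp)
  | _ + 1, _, _, ⟨H0, h', H1, H2⟩, ⟨K0, k', K1, K2⟩ =>
    ⟨fun p hp => add_nonneg (H0 p hp) (K0 p hp), fun p => h' p + k' p,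
      fun p hp => by
        have := (H1 p hp).add (K1 p hp)
        rw [← neg_add] at this
        exact this, H2.add K2⟩

theorem CMon.mul : ∀ {n : ℕ} {h k : ℝ → ℝ}, CMon n h → CMon n k → CMon n (fun p => h p * k p)
  | 0, _, _, H, K => fun p hp => mul_nonneg (H p hp) (K p hp)
  | _ + 1, h, k, H, K => by
    have Hp := H.pred
    have Kp := K.pred
    obtain ⟨H0, h', H1, H2⟩ := H
    obtain ⟨K0, k', K1, K2⟩ := K
    refine ⟨fun p hp => mul_nonneg (H0 p hp) (K0 p hp), fun p => h' p * k p + h p * k' p,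
      fun p hp => ?_, (H2.mul Kp).add (Hp.mul K2)⟩
    have := (H1 p hp).mul (K1 p hp)
    rw [show -h' p * k p + h p * -k' p = -(h' p * k p + h p * k' p) by ring] at this
    exact this

theorem CMon.const : ∀ (n : ℕ) {c : ℝ}, 0 ≤ c → CMon n (fun _ => c)
  | 0, _, hc => fun _ _ => hc
  | n + 1, c, hc => ⟨fun _ _ => hc, fun _ => 0, fun p _ => by simpa using hasDerivAt_const p c,
      CMon.const n le_rfl⟩

theorem CMon.rpow_neg {g g' : ℝ → ℝ} (hg : ∀ p : ℝ, 0 < p → 0 < g p)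
    (hg' : ∀ p : ℝ, 0 < p → HasDerivAt g (g' p) p) (hcm : ∀ n, CMon n g') :
    ∀ (n : ℕ) (r : ℝ), 0 < r → CMon n (fun p => g p ^ (-r))
  | 0, r, _ => fun p hp => (Real.rpow_pos_of_pos (hg p hp) _).le
  | n + 1, r, hr => by
    refine ⟨fun p hp => (Real.rpow_pos_of_pos (hg p hp) _).le,
      fun p => (r * g' p) * g p ^ (-(r + 1)), fun p hp => ?_,
      ((CMon.const n hr.le).mul (hcm n)).mul (CMon.rpow_neg hg hg' hcm n (r + 1) (by linarith))⟩
    have := (hg' p hp).rpow_const (p := -r) (Or.inl (hg p hp).ne')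
    convert this using 1
    rw [show -(r + 1) = -r - 1 by ring]
    ring

/-- If `D 0` is completely monotone and `D k' = - D (k+1)` then all `D k` are nonnegative. -/
theorem CMon.seq_nonneg : ∀ (n : ℕ) {h : ℝ → ℝ} {D : ℕ → ℝ → ℝ}, CMon n h →
    (∀ p : ℝ, 0 < p → h p = D 0 p) →
    (∀ k, ∀ p : ℝ, 0 < p → HasDerivAt (D k) (-D (k + 1) p) p) → ∀ p : ℝ, 0 < p → 0 ≤ D n p
  | 0, _, _, H, he, _ => fun p hp => he p hp ▸ H p hp
  | n + 1, h, D, ⟨_, h', H1, H2⟩, he, hD => by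
    refine CMon.seq_nonneg n (D := fun k => D (k + 1)) H2 (fun p hp => ?_) (fun k => hD (k + 1))
    have h1 : HasDerivAt (D 0) (-h' p) p := by
      refine (H1 p hp).congr_of_eventuallyEq ?_
      filter_upwards [lt_mem_nhds hp] with q hq using (he q hq).symm
    have := h1.unique (hD 0 p hp)
    simpa using this

theorem J_cont {w : ℝ → ℝ} (hw : ContinuousOn w (Icc 0 1)) (m p : ℝ) (hp : 0 < p) :
    ContinuousOn (fun α : ℝ => p ^ (α - m) * w α) (Icc 0 1) := by
  refine ContinuousOn.mul ?_ hw
  exact (Real.continuous_const_rpow hp.ne').comp_continuousOn (by fun_prop)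

theorem J_deriv {w : ℝ → ℝ} (hw : ContinuousOn w (Icc 0 1)) (m p : ℝ) (hp : 0 < p) :
    HasDerivAt (fun p : ℝ => ∫ α in (0:ℝ)..1, p ^ (α - m) * w α)
      (∫ α in (0:ℝ)..1, p ^ (α - (m + 1)) * ((α - m) * w α)) p := by
  have hw' : ContinuousOn (fun α => (α - m) * w α) (Icc 0 1) := by fun_prop
  have hI : uIcc (0:ℝ) 1 = Icc 0 1 := uIcc_of_le zero_le_one
  have hsub : uIoc (0:ℝ) 1 ⊆ Icc 0 1 := by
    rw [uIoc_of_le zero_le_one]; exact Ioc_subset_Icc_self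
  have hmeas : ∀ {f : ℝ → ℝ}, ContinuousOn f (Icc 0 1) →
      AEStronglyMeasurable f (volume.restrict (uIoc (0:ℝ) 1)) := fun hf =>
    (hf.mono hsub).aestronglyMeasurable measurableSet_uIoc
  refine (intervalIntegral.hasDerivAt_integral_of_dominated_loc_of_deriv_le
    (F := fun p α => p ^ (α - m) * w α)
    (F' := fun p α => p ^ (α - (m + 1)) * ((α - m) * w α))
    (bound := fun α => ((p / 2) ^ (α - (m + 1)) + (2 * p) ^ (α - (m + 1))) * |(α - m) * w α|)
    (s := Ioo (p / 2) (2 * p)) (Ioo_mem_nhds (by linarith) (by linarith)) ?_ ?_ ?_ ?_ ?_ ?_).2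
  · filter_upwards [lt_mem_nhds hp] with q hq
    exact hmeas (J_cont hw m q hq)
  · exact ContinuousOn.intervalIntegrable (hI ▸ J_cont hw m p hp)
  · exact hmeas (J_cont hw' (m + 1) p hp)
  · refine ae_of_all _ fun α _ q hq => ?_
    have hq0 : 0 < q := by linarith [hq.1]
    rw [norm_mul, Real.norm_eq_abs, Real.norm_eq_abs, abs_of_pos (Real.rpow_pos_of_pos hq0 _)]
    refine mul_le_mul_of_nonneg_right ?_ (abs_nonneg _)
    have h1 : 0 < (p / 2) ^ (α - (m + 1)) := Real.rpow_pos_of_pos (by linarith) _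
    have h2 : 0 < (2 * p) ^ (α - (m + 1)) := Real.rpow_pos_of_pos (by linarith) _
    rcases le_total 0 (α - (m + 1)) with h | h
    · have := Real.rpow_le_rpow hq0.le hq.2.le h
      linarith
    · have := Real.rpow_le_rpow_of_nonpos (by linarith : 0 < p / 2) hq.1.le h
      linarith
  · refine ContinuousOn.intervalIntegrable ?_
    rw [hI]
    have h1 := J_cont (w := fun α => |(α - m) * w α|) hw'.abs (m + 1) (p / 2) (by linarith)
    have h2 := J_cont (w := fun α => |(α - m) * w α|) hw'.abs (m + 1) (2 * p) (by linarith)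
    simp only [add_mul]
    exact h1.add h2
  · refine ae_of_all _ fun α _ q hq => ?_
    have hq0 : 0 < q := by linarith [hq.1]
    have := (Real.hasDerivAt_rpow_const (x := q) (p := α - m) (Or.inl hq0.ne')).mul_const (w α)
    refine this.congr_deriv ?_
    rw [show α - (m + 1) = α - m - 1 by ring]
    ring

theorem J_CMon : ∀ (n : ℕ) (m : ℝ), 1 ≤ m → ∀ {w : ℝ → ℝ}, ContinuousOn w (Icc 0 1) →
    (∀ α ∈ Icc (0:ℝ) 1, 0 ≤ w α) → CMon n (fun p : ℝ => ∫ α in (0:ℝ)..1, p ^ (α - m) * w α)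
  | 0, m, hm, w, hw, h0 => fun p hp =>
    intervalIntegral.integral_nonneg zero_le_one fun α hα =>
      mul_nonneg (Real.rpow_pos_of_pos hp _).le (h0 α hα)
  | n + 1, m, hm, w, hw, h0 => by
    refine ⟨fun p hp => intervalIntegral.integral_nonneg zero_le_one fun α hα =>
      mul_nonneg (Real.rpow_pos_of_pos hp _).le (h0 α hα),
      fun p => ∫ α in (0:ℝ)..1, p ^ (α - (m + 1)) * ((m - α) * w α), fun p hp => ?_,
      J_CMon n (m + 1) (by linarith) (w := fun α => (m - α) * w α) (by fun_prop)
        fun α hα => mul_nonneg (by linarith [hα.2]) (h0 α hα)⟩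
    convert J_deriv hw m p hp using 1
    rw [← intervalIntegral.integral_neg]
    congr 1
    ext α
    ring

theorem lap_int {z : ℝ → ℝ} (hc : ContinuousOn z (Ioi 0))
    (hi : ∀ p : ℝ, 0 < p → IntegrableOn (fun t => Real.exp (-p * t) * z t) (Ioi 0))
    (n : ℕ) (p : ℝ) (hp : 0 < p) :
    IntegrableOn (fun t => t ^ n * Real.exp (-p * t) * z t) (Ioi 0) := by
  refine Integrable.mono' (g := fun t => (n.factorial / (p / 2) ^ n) *
    ‖Real.exp (-(p / 2) * t) * z t‖) (((hi (p / 2) (by linarith)).norm).const_mul _) ?_ ?_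
  · refine ContinuousOn.aestronglyMeasurable ?_ measurableSet_Ioi
    fun_prop
  · refine (ae_restrict_iff' measurableSet_Ioi).2 (ae_of_all _ fun t (ht : 0 < t) => ?_)
    rw [norm_mul, norm_mul (Real.exp _), ← mul_assoc]
    refine mul_le_mul_of_nonneg_right ?_ (norm_nonneg _)
    rw [Real.norm_of_nonneg (by positivity), Real.norm_of_nonneg (by positivity)]
    have h := Real.pow_div_factorial_le_exp (x := p / 2 * t) (by positivity) n
    rw [div_le_iff₀ (by positivity), mul_pow] at h
    have e : Real.exp (-p * t) = Real.exp (-(p / 2) * t) * Real.exp (-(p / 2) * t) := by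
      rw [← Real.exp_add]; congr 1; ring
    have e2 : Real.exp (p / 2 * t) * Real.exp (-(p / 2) * t) = 1 := by
      rw [← Real.exp_add]; simp
    rw [div_mul_eq_mul_div, le_div_iff₀ (by positivity), e]
    calc t ^ n * (Real.exp (-(p / 2) * t) * Real.exp (-(p / 2) * t)) * (p / 2) ^ n
        = ((p / 2) ^ n * t ^ n) * (Real.exp (-(p / 2) * t) * Real.exp (-(p / 2) * t)) := by ring
      _ ≤ (Real.exp (p / 2 * t) * n.factorial) *
          (Real.exp (-(p / 2) * t) * Real.exp (-(p / 2) * t)) := by gcongr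
      _ = n.factorial * Real.exp (-(p / 2) * t) *
          (Real.exp (p / 2 * t) * Real.exp (-(p / 2) * t)) := by ring
      _ = _ := by rw [e2, mul_one]

theorem lap_deriv {z : ℝ → ℝ} (hc : ContinuousOn z (Ioi 0))
    (hi : ∀ p : ℝ, 0 < p → IntegrableOn (fun t => Real.exp (-p * t) * z t) (Ioi 0))
    (n : ℕ) (p : ℝ) (hp : 0 < p) :
    HasDerivAt (fun p : ℝ => ∫ t in Ioi (0:ℝ), t ^ n * Real.exp (-p * t) * z t)
      (-∫ t in Ioi (0:ℝ), t ^ (n + 1) * Real.exp (-p * t) * z t) p := by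
  rw [← integral_neg]
  refine (hasDerivAt_integral_of_dominated_loc_of_deriv_le
    (F := fun (p t : ℝ) => t ^ n * Real.exp (-p * t) * z t)
    (F' := fun (p t : ℝ) => -(t ^ (n + 1) * Real.exp (-p * t) * z t))
    (bound := fun t => ‖t ^ (n + 1) * Real.exp (-(p / 2) * t) * z t‖)
    (s := Ioi (p / 2)) (Ioi_mem_nhds (by linarith)) ?_ (lap_int hc hi n p hp)
      (lap_int hc hi (n + 1) p hp).neg.aestronglyMeasurable ?_
      (lap_int hc hi (n + 1) (p / 2) (by linarith)).norm ?_).2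
  · filter_upwards [lt_mem_nhds hp] with q hq
    exact (lap_int hc hi n q hq).aestronglyMeasurable
  · refine (ae_restrict_iff' measurableSet_Ioi).2 (ae_of_all _ fun t (ht : 0 < t) q hq => ?_)
    have hq' : p / 2 < q := hq
    rw [norm_neg, norm_mul, norm_mul _ (z t)]
    refine mul_le_mul_of_nonneg_right ?_ (norm_nonneg _)
    rw [Real.norm_of_nonneg (by positivity), Real.norm_of_nonneg (by positivity)]
    gcongr
  · refine ae_of_all _ fun t q _ => ?_
    have h1 : HasDerivAt (fun q : ℝ => Real.exp (-q * t)) (Real.exp (-q * t) * (-1 * t)) q :=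
      (((hasDerivAt_id q).neg).mul_const t).exp
    have := (h1.const_mul (t ^ n)).mul_const (z t)
    refine this.congr_deriv ?_
    ring

theorem peak_mono {a x y : ℝ} (hy : 0 < y) (h : (x - y) / y ≤ (x - y) / a) :
    x * Real.exp (-x / a) ≤ y * Real.exp (-y / a) := by
  have h1 : x / y ≤ Real.exp ((x - y) / a) := by
    have h2 := Real.add_one_le_exp ((x - y) / a)
    have h3 : x / y = (x - y) / y + 1 := by field_simp; ring
    linarith
  rw [div_le_iff₀ hy] at h1
  calc x * Real.exp (-x / a) ≤ (Real.exp ((x - y) / a) * y) * Real.exp (-x / a) := by gcongr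
    _ = y * (Real.exp ((x - y) / a) * Real.exp (-x / a)) := by ring
    _ = _ := by rw [← Real.exp_add]; congr 2; ring

theorem peak_strict {a y : ℝ} (ha : 0 < a) (h : y ≠ a) :
    y * Real.exp (-y / a) < a * Real.exp (-a / a) := by
  have h1 : y / a < Real.exp ((y - a) / a) := by
    have h2 := Real.add_one_lt_exp (x := (y - a) / a) (div_ne_zero (sub_ne_zero.2 h) ha.ne')
    have h3 : y / a = (y - a) / a + 1 := by field_simp; ring
    linarith
  rw [div_lt_iff₀ ha] at h1
  calc y * Real.exp (-y / a) < (Real.exp ((y - a) / a) * a) * Real.exp (-y / a) := by gcongr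
    _ = a * (Real.exp ((y - a) / a) * Real.exp (-y / a)) := by ring
    _ = _ := by rw [← Real.exp_add]; congr 2; ring

/-- Laplace-type concentration. -/
theorem peak_tendsto {h : ℝ → ℝ} {a : ℝ} (ha : 0 < a)
    (hcont : ContinuousAt h a) (h0 : h a = 0)
    (hi : ∀ n : ℕ, 1 ≤ n → IntegrableOn (fun t => (t * Real.exp (-t / a)) ^ n * h t) (Ioi 0))
    (hi1 : ∀ n : ℕ, 1 ≤ n → IntegrableOn (fun t => (t * Real.exp (-t / a)) ^ n) (Ioi 0)) :
    Tendsto (fun n : ℕ => (∫ t in Ioi (0:ℝ), (t * Real.exp (-t / a)) ^ n * h t) /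
      (∫ t in Ioi (0:ℝ), (t * Real.exp (-t / a)) ^ n)) atTop (nhds 0) := by
  set c : ℝ → ℝ := fun t => t * Real.exp (-t / a) with hcdef
  have hcc : Continuous c := by fun_prop
  have hcpos : ∀ t, 0 < t → 0 < c t := fun t ht => by positivity
  rw [Metric.tendsto_atTop']
  intro ε hε
  obtain ⟨δ₀, hδ₀, hδ⟩ := Metric.continuousAt_iff.1 hcont (ε / 2) (by linarith)
  set δ := min (δ₀ / 2) (a / 2) with hδdef
  have hδpos : 0 < δ := by positivity
  have hδa : δ < a := by have := min_le_right (δ₀ / 2) (a / 2); linarith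
  have hδδ : δ < δ₀ := by have := min_le_left (δ₀ / 2) (a / 2); linarith
  set θ := max (c (a - δ)) (c (a + δ)) with hθ
  have hθ0 : 0 < θ := lt_max_of_lt_left (hcpos _ (by linarith))
  have hθa : θ < c a := max_lt (peak_strict ha (by linarith)) (peak_strict ha (by linarith))
  have hfar : ∀ t, δ < |t - a| → c t ≤ θ := by
    intro t ht
    rcases lt_abs.1 ht with h1 | h1
    · refine le_max_of_le_right (peak_mono (by linarith) ?_)
      exact div_le_div_of_nonneg_left (by linarith) ha (by linarith)
    · refine le_max_of_le_left (peak_mono (by linarith) ?_)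
      have := div_le_div_of_nonneg_left (by linarith : 0 ≤ (a - δ) - t)
        (by linarith : 0 < a - δ) (by linarith : a - δ ≤ a)
      have e1 : (t - (a - δ)) / (a - δ) = -(((a - δ) - t) / (a - δ)) := by ring
      have e2 : (t - (a - δ)) / a = -(((a - δ) - t) / a) := by ring
      rw [e1, e2]
      linarith
  obtain ⟨m, hm1, hm2⟩ := exists_between hθa
  obtain ⟨η₀, hη₀, hη⟩ := Metric.continuousAt_iff.1 (hcc.continuousAt (x := a)) (c a - m)
    (by linarith : 0 < c a - m)
  set η := min (η₀ / 2) (a / 2) with hηdef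
  have hηpos : 0 < η := by positivity
  have hηa : η < a := by have := min_le_right (η₀ / 2) (a / 2); linarith
  have hηη : η < η₀ := by have := min_le_left (η₀ / 2) (a / 2); linarith
  have hnear : ∀ t ∈ Ioc a (a + η), m ≤ c t := by
    intro t ht
    have := hη (x := t) (by rw [Real.dist_eq, abs_lt]; constructor <;> linarith [ht.1, ht.2])
    rw [Real.dist_eq, abs_lt] at this
    linarith [this.1]
  have hm0 : 0 < m := hθ0.trans hm1
  -- lower bound for the denominator
  have hden : ∀ n : ℕ, 1 ≤ n → η * m ^ n ≤ ∫ t in Ioi (0:ℝ), c t ^ n := by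
    intro n hn
    calc η * m ^ n = ∫ t in Ioc a (a + η), m ^ n := by
          simp [hηpos.le]
      _ ≤ ∫ t in Ioc a (a + η), c t ^ n := by
          refine setIntegral_mono_on (by simp) ?_ measurableSet_Ioc fun t ht => ?_
          · exact (hi1 n hn).mono_set fun t ht => ha.trans ht.1
          · exact pow_le_pow_left₀ hm0.le (hnear t ht) n
      _ ≤ _ := by
          refine setIntegral_mono_set (hi1 n hn) ?_ ?_
          · exact (ae_restrict_iff' measurableSet_Ioi).2
              (ae_of_all _ fun t ht => (pow_pos (hcpos t ht) n).le)
          · exact LE.le.eventuallyLE fun t ht => ha.trans ht.1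
  set C := ∫ t in Ioi (0:ℝ), ‖c t ^ 1 * h t‖ with hC
  have hC0 : 0 ≤ C := integral_nonneg fun _ => norm_nonneg _
  have hnum : ∀ n : ℕ, |∫ t in Ioi (0:ℝ), c t ^ (n + 1) * h t| ≤
      ε / 2 * (∫ t in Ioi (0:ℝ), c t ^ (n + 1)) + θ ^ n * C := by
    intro n
    rw [hC, ← integral_const_mul, ← integral_const_mul, ← integral_add
      ((hi1 (n + 1) (by omega)).const_mul _) ((hi 1 le_rfl).norm.const_mul _)]
    rw [← Real.norm_eq_abs]
    refine (norm_integral_le_integral_norm (fun t => c t ^ (n + 1) * h t)).trans ?_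
    refine setIntegral_mono_on (hi (n + 1) (by omega)).norm
      (((hi1 (n + 1) (by omega)).const_mul _).add ((hi 1 le_rfl).norm.const_mul _))
      measurableSet_Ioi fun t ht => ?_
    have hct := hcpos t ht
    rw [norm_mul, norm_mul, Real.norm_of_nonneg (pow_pos hct (n + 1)).le, pow_one,
      Real.norm_of_nonneg hct.le, Real.norm_eq_abs]
    by_cases hd : δ < |t - a|
    · have h1 := pow_le_pow_left₀ hct.le (hfar t hd) n
      have h2 : c t ^ (n + 1) * |h t| ≤ θ ^ n * (c t * |h t|) := by
        rw [pow_succ, mul_assoc]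
        gcongr
      have h3 : 0 ≤ ε / 2 * c t ^ (n + 1) := by positivity
      linarith
    · have h1 := hδ (x := t) (by rw [Real.dist_eq]; linarith)
      rw [h0, Real.dist_eq, sub_zero] at h1
      have h2 : c t ^ (n + 1) * |h t| ≤ c t ^ (n + 1) * (ε / 2) := by gcongr
      have h3 : 0 ≤ θ ^ n * (c t * |h t|) := by positivity
      linarith
  have hlim : Tendsto (fun n : ℕ => (θ / m) ^ n * (C / (η * m))) atTop (nhds 0) := by
    have := (tendsto_pow_atTop_nhds_zero_of_lt_one (r := θ / m) (by positivity)
      ((div_lt_one hm0).2 hm1)).mul_const (C / (η * m))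
    simpa using this
  obtain ⟨N, hN⟩ := eventually_atTop.1 (hlim.eventually (gt_mem_nhds (half_pos hε)))
  refine ⟨N + 1, fun n hn => ?_⟩
  obtain ⟨k, rfl⟩ : ∃ k, n = k + 1 := ⟨n - 1, by omega⟩
  have hk := hN k (by omega)
  have hI := hden (k + 1) (by omega)
  have hI0 : 0 < ∫ t in Ioi (0:ℝ), c t ^ (k + 1) := lt_of_lt_of_le (by positivity) hI
  rw [Real.dist_eq, sub_zero, abs_div, abs_of_pos hI0, div_lt_iff₀ hI0]
  refine (hnum k).trans_lt ?_
  have h4 : θ ^ k * C < ε / 2 * (η * m ^ (k + 1)) := by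
    have e : (θ / m) ^ k * (C / (η * m)) = θ ^ k * C / (η * m ^ (k + 1)) := by
      rw [div_pow, pow_succ]; field_simp
    rw [e, div_lt_iff₀ (by positivity)] at hk
    exact hk
  have h5 : ε / 2 * (η * m ^ (k + 1)) ≤ ε / 2 * ∫ t in Ioi (0:ℝ), c t ^ (k + 1) := by gcongr
  linarith

theorem one_int (n : ℕ) (p : ℝ) (hp : 0 < p) :
    ∫ t in Ioi (0:ℝ), t ^ n * Real.exp (-p * t) = n.factorial / p ^ (n + 1) := by
  have h := Real.integral_rpow_mul_exp_neg_mul_Ioi (a := (n:ℝ) + 1) (by positivity) hp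
  rw [Real.Gamma_nat_eq_factorial] at h
  have e : ((n:ℝ) + 1) = ((n + 1 : ℕ) : ℝ) := by push_cast; rfl
  simp only [add_sub_cancel_right, Real.rpow_natCast] at h
  rw [e, Real.rpow_natCast] at h
  simp only [neg_mul]
  rw [h, one_div, inv_pow]
  field_simp

theorem post_widder {z : ℝ → ℝ} (hc : ContinuousOn z (Ioi 0))
    (hi : ∀ p : ℝ, 0 < p → IntegrableOn (fun t => Real.exp (-p * t) * z t) (Ioi 0))
    {a : ℝ} (ha : 0 < a) :
    Tendsto (fun n : ℕ => ((n:ℝ) / a) ^ (n + 1) / n.factorial *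
      ∫ t in Ioi (0:ℝ), t ^ n * Real.exp (-((n:ℝ) / a) * t) * z t) atTop (nhds (z a)) := by
  have hce : ∀ (n : ℕ) (t : ℝ),
      (t * Real.exp (-t / a)) ^ n = t ^ n * Real.exp (-((n:ℝ) / a) * t) := by
    intro n t
    rw [mul_pow, ← Real.exp_nat_mul]
    congr 2
    ring
  have hp : ∀ n : ℕ, 1 ≤ n → 0 < (n:ℝ) / a := fun n hn => by
    have : (0:ℝ) < n := by exact_mod_cast hn
    positivity
  have hi1 : ∀ n : ℕ, 1 ≤ n →
      IntegrableOn (fun t : ℝ => t ^ n * Real.exp (-((n:ℝ) / a) * t)) (Ioi 0) := by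
    intro n hn
    refine Integrable.of_integral_ne_zero ?_
    have := hp n hn
    rw [one_int n _ this]
    positivity
  have hiz : ∀ n : ℕ, 1 ≤ n →
      IntegrableOn (fun t : ℝ => t ^ n * Real.exp (-((n:ℝ) / a) * t) * z t) (Ioi 0) :=
    fun n hn => lap_int hc hi n _ (hp n hn)
  have key := peak_tendsto (h := fun t => z t - z a) ha
    ((hc.continuousAt (Ioi_mem_nhds ha)).sub continuousAt_const) (by simp)
    (fun n hn => by
      simp only [hce, mul_sub]
      exact (hiz n hn).sub ((hi1 n hn).mul_const _))
    (fun n hn => by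
      simp only [hce]
      exact hi1 n hn)
  have key2 := key.add_const (z a)
  rw [zero_add] at key2
  refine key2.congr' ?_
  filter_upwards [eventually_ge_atTop 1] with n hn
  simp only [hce, mul_sub]
  rw [integral_sub (hiz n hn) ((hi1 n hn).mul_const _), integral_mul_const,
    one_int n _ (hp n hn)]
  have := hp n hn
  field_simp
  ring

theorem antitone_of_lap {z : ℝ → ℝ} (hc : ContinuousOn z (Ioi 0))
    (hi : ∀ p : ℝ, 0 < p → IntegrableOn (fun t => Real.exp (-p * t) * z t) (Ioi 0))
    {f' : ℝ → ℝ} (hf : ∀ p : ℝ, 0 < p →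
      HasDerivAt (fun p : ℝ => p * ∫ t in Ioi (0:ℝ), Real.exp (-p * t) * z t) (f' p) p)
    (hcm : ∀ n, CMon n f') {a b : ℝ} (ha : 0 < a) (hab : a ≤ b) : z b ≤ z a := by
  set L : ℕ → ℝ → ℝ := fun n p => ∫ t in Ioi (0:ℝ), t ^ n * Real.exp (-p * t) * z t with hL
  have hLd : ∀ n p, 0 < p → HasDerivAt (L n) (-L (n + 1) p) p := fun n p hp => lap_deriv hc hi n p hp
  have hf0 : ∀ p, 0 < p → f' p = 1 * L 0 p + p * (-L 1 p) := by
    intro p hp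
    have h1 := (hasDerivAt_id p).mul (hLd 0 p hp)
    have h2 := hf p hp
    refine h2.unique ?_
    have e : (fun p : ℝ => p * ∫ t in Ioi (0:ℝ), Real.exp (-p * t) * z t) = id * L 0 := by
      funext q
      simp [hL]
    rw [e]
    exact h1
  have hD : ∀ (n : ℕ) (p : ℝ), 0 < p → 0 ≤ ((n:ℝ) + 1) * L n p - p * L (n + 1) p := by
    intro n
    refine CMon.seq_nonneg n (D := fun (n : ℕ) p => ((n:ℝ) + 1) * L n p - p * L (n + 1) p)
      (hcm n) (fun p hp => ?_) (fun k p hp => ?_)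
    · rw [hf0 p hp]; simp; ring
    · have h1 := ((hLd k p hp).const_mul ((k:ℝ) + 1)).sub
        ((hasDerivAt_id p).mul (hLd (k + 1) p hp))
      refine h1.congr_deriv ?_
      push_cast
      simp only [id]
      ring
  have hmono : ∀ n : ℕ, MonotoneOn (fun p : ℝ => p ^ (n + 1) / n.factorial * L n p) (Ioi 0) := by
    intro n
    have hG : ∀ p : ℝ, 0 < p → HasDerivAt (fun p : ℝ => p ^ (n + 1) / n.factorial * L n p)
        (p ^ n / n.factorial * (((n:ℝ) + 1) * L n p - p * L (n + 1) p)) p := by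
      intro p hp
      have h1 := ((hasDerivAt_pow (n + 1) p).div_const (n.factorial : ℝ)).mul (hLd n p hp)
      refine h1.congr_deriv ?_
      push_cast
      ring
    refine monotoneOn_of_deriv_nonneg (convex_Ioi 0)
      (fun p hp => (hG p hp).continuousAt.continuousWithinAt) ?_ ?_
    · intro p hp
      rw [interior_Ioi] at hp
      exact (hG p hp).differentiableAt.differentiableWithinAt
    · intro p hp
      rw [interior_Ioi] at hp
      have hp' : 0 < p := hp
      rw [(hG p hp).deriv]
      exact mul_nonneg (by positivity) (hD n p hp)
  have hb : 0 < b := ha.trans_le hab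
  refine le_of_tendsto_of_tendsto (post_widder hc hi hb) (post_widder hc hi ha) ?_
  filter_upwards [eventually_ge_atTop 1] with n hn
  have hn' : (0:ℝ) < n := by exact_mod_cast hn
  exact hmono n (show (0:ℝ) < n / b by positivity) (show (0:ℝ) < n / a by positivity)
    (by gcongr)

theorem fundamental_solution_lower_bound_at_zero (μ μ₁ : ℝ → ℝ) (ν ρ : ℝ)
    (hC2 : ContDiffOn ℝ 2 μ (Set.Icc 0 1))
    (hν : 0 ≤ ν) (hρ : 0 < ρ)
    (hμ₁c : ContinuousOn μ₁ (Set.Icc 0 1))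
    (hμform : ∀ α ∈ Set.Icc (0:ℝ) 1, μ α = α ^ ν * μ₁ α)
    (hμ₁low : ∀ α ∈ Set.Icc (0:ℝ) 1, ρ ≤ μ₁ α)
    (Z : ℝ → ℝ → ℝ)
    (hZc : ∀ x : ℝ, ContinuousOn (fun t => Z t x) (Set.Ioi 0))
    (hZlap : ∀ p : ℝ, 0 < p → ∀ x : ℝ,
      IntegrableOn (fun t : ℝ => Real.exp (-p * t) * Z t x) (Set.Ioi 0) ∧
      ∫ t in Set.Ioi (0:ℝ), Real.exp (-p * t) * Z t x
        = (1 / 2) * Kreal μ p / Real.sqrt (p * Kreal μ p)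
            * Real.exp (-|x| * Real.sqrt (p * Kreal μ p))) :
    ∀ T > (0:ℝ), ∃ ρ₀ > (0:ℝ), ∀ t : ℝ, 0 < t → t ≤ T → ρ₀ ≤ Z t 0 := by
  have hμc : ContinuousOn μ (Icc 0 1) := hC2.continuousOn
  have hμ0 : ∀ α ∈ Icc (0:ℝ) 1, 0 ≤ μ α := fun α hα => by
    rw [hμform α hα]
    exact mul_nonneg (Real.rpow_nonneg hα.1 _) (hρ.le.trans (hμ₁low α hα))
  have hμpos : ∀ α ∈ Ioo (0:ℝ) 1, 0 < μ α := fun α hα => by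
    rw [hμform α (Ioo_subset_Icc_self hα)]
    exact mul_pos (Real.rpow_pos_of_pos hα.1 _)
      (hρ.trans_le (hμ₁low α (Ioo_subset_Icc_self hα)))
  have hI : uIcc (0:ℝ) 1 = Icc 0 1 := uIcc_of_le zero_le_one
  have hint : ∀ m p : ℝ, 0 < p →
      IntervalIntegrable (fun α : ℝ => p ^ (α - m) * μ α) volume 0 1 := fun m p hp =>
    ContinuousOn.intervalIntegrable (hI ▸ J_cont hμc m p hp)
  have hμint : IntervalIntegrable μ volume 0 1 := ContinuousOn.intervalIntegrable (hI ▸ hμc)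
  set M := ∫ α in (0:ℝ)..1, μ α with hM
  have hMpos : 0 < M := intervalIntegral.intervalIntegral_pos_of_pos_on hμint hμpos zero_lt_one
  have hKpos : ∀ p : ℝ, 0 < p → 0 < Kreal μ p := fun p hp =>
    intervalIntegral.intervalIntegral_pos_of_pos_on (hint 1 p hp)
      (fun α hα => mul_pos (Real.rpow_pos_of_pos hp _) (hμpos α hα)) zero_lt_one
  have hKM : ∀ p : ℝ, 0 < p → p ≤ 1 → M ≤ Kreal μ p := fun p hp hp1 => by
    refine intervalIntegral.integral_mono_on zero_le_one hμint (hint 1 p hp) fun α hα => ?_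
    exact le_mul_of_one_le_left (hμ0 α hα)
      (Real.one_le_rpow_of_pos_of_le_one_of_nonpos hp hp1 (by linarith [hα.2]))
  set z : ℝ → ℝ := fun t => Z t 0 with hz
  have hc : ContinuousOn z (Ioi 0) := hZc 0
  have hi : ∀ p : ℝ, 0 < p → IntegrableOn (fun t => Real.exp (-p * t) * z t) (Ioi 0) :=
    fun p hp => (hZlap p hp 0).1
  have hF : ∀ p : ℝ, 0 < p → ∫ t in Ioi (0:ℝ), Real.exp (-p * t) * z t
      = (1 / 2) * Kreal μ p / Real.sqrt (p * Kreal μ p) := fun p hp => by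
    have := (hZlap p hp 0).2
    simpa using this
  set g : ℝ → ℝ := fun p => ∫ α in (0:ℝ)..1, p ^ (α - 0) * μ α with hg
  set g' : ℝ → ℝ := fun p => ∫ α in (0:ℝ)..1, p ^ (α - 1) * (α * μ α) with hg'
  have hgK : ∀ p : ℝ, 0 < p → g p = p * Kreal μ p := fun p hp => by
    rw [hg, Kreal, ← intervalIntegral.integral_const_mul]
    refine intervalIntegral.integral_congr fun α _ => ?_
    show p ^ (α - 0) * μ α = p * (p ^ (α - 1) * μ α)
    rw [show α - 0 = (α - 1) + 1 by ring, Real.rpow_add_one hp.ne']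
    ring
  have hgpos : ∀ p : ℝ, 0 < p → 0 < g p := fun p hp => by
    rw [hgK p hp]; exact mul_pos hp (hKpos p hp)
  have hgd : ∀ p : ℝ, 0 < p → HasDerivAt g (g' p) p := fun p hp => by
    have := J_deriv hμc 0 p hp
    simpa [hg, hg'] using this
  have hg'cm : ∀ n, CMon n g' := fun n =>
    J_CMon n 1 le_rfl (w := fun α => α * μ α) (by fun_prop)
      fun α hα => mul_nonneg hα.1 (hμ0 α hα)
  have hpF : ∀ p : ℝ, 0 < p →
      p * ∫ t in Ioi (0:ℝ), Real.exp (-p * t) * z t = 1 / 2 * g p ^ (1 / 2 : ℝ) := fun p hp => by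
    rw [hF p hp, ← hgK p hp, ← Real.sqrt_eq_rpow]
    have hs := Real.sqrt_pos.2 (hgpos p hp)
    have h2 := Real.mul_self_sqrt (hgpos p hp).le
    have h3 := hgK p hp
    field_simp
    nlinarith
  have hanti : ∀ a b : ℝ, 0 < a → a ≤ b → z b ≤ z a := fun a b ha hab => by
    refine antitone_of_lap hc hi (f' := fun p => (1 / 4 * g' p) * g p ^ (-(1 / 2) : ℝ))
      (fun p hp => ?_) (fun n => ?_) ha hab
    · have h1 := ((hgd p hp).rpow_const (p := (1 / 2 : ℝ)) (Or.inl (hgpos p hp).ne')).const_mul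
        (1 / 2 : ℝ)
      have h2 := h1.congr_of_eventuallyEq
        (f₁ := fun p : ℝ => p * ∫ t in Ioi (0:ℝ), Real.exp (-p * t) * z t) (by
          filter_upwards [lt_mem_nhds hp] with q hq using hpF q hq)
      refine h2.congr_deriv ?_
      rw [show (1 / 2 - 1 : ℝ) = -(1 / 2) by norm_num]
      ring
    · exact ((CMon.const n (by norm_num)).mul (hg'cm n)).mul
        (CMon.rpow_neg hgpos hgd hg'cm n (1 / 2) (by norm_num))
  intro T hT
  refine ⟨z T, ?_, fun t ht htT => hanti t T ht htT⟩
  by_contra hneg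
  have hzT : z T ≤ 0 := not_lt.1 hneg
  -- the transform is then bounded near zero
  set B := ∫ t in Ioc 0 T, Real.exp T * ‖Real.exp (-1 * t) * z t‖ with hB
  have hbound : ∀ p : ℝ, 0 < p → p ≤ 1 →
      ∫ t in Ioi (0:ℝ), Real.exp (-p * t) * z t ≤ B := by
    intro p hp hp1
    rw [← Ioc_union_Ioi_eq_Ioi hT.le, setIntegral_union Ioc_disjoint_Ioi_same measurableSet_Ioi
      ((hi p hp).mono_set Ioc_subset_Ioi_self) ((hi p hp).mono_set (Ioi_subset_Ioi hT.le))]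
    have h1 : ∫ t in Ioi T, Real.exp (-p * t) * z t ≤ 0 := by
      refine setIntegral_nonpos measurableSet_Ioi fun t (ht : T < t) => ?_
      exact mul_nonpos_of_nonneg_of_nonpos (Real.exp_pos _).le ((hanti T t hT ht.le).trans hzT)
    have h2 : ∫ t in Ioc 0 T, Real.exp (-p * t) * z t ≤ B := by
      refine setIntegral_mono_on ((hi p hp).mono_set Ioc_subset_Ioi_self)
        ((((hi 1 one_pos).mono_set Ioc_subset_Ioi_self).norm).const_mul _) measurableSet_Ioc
        fun t ht => ?_
      refine (le_abs_self _).trans ?_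
      rw [norm_mul, abs_mul, Real.norm_eq_abs, Real.norm_eq_abs, Real.abs_exp, Real.abs_exp,
        ← mul_assoc, ← Real.exp_add]
      gcongr
      nlinarith [ht.1, ht.2]
    linarith
  have hlow : ∀ p : ℝ, 0 < p → p ≤ 1 → M ≤ 4 * B ^ 2 * p := by
    intro p hp hp1
    have h1 := hbound p hp hp1
    rw [hF p hp] at h1
    have hK := hKpos p hp
    have hs := Real.sqrt_pos.2 (mul_pos hp hK)
    have h2 := Real.mul_self_sqrt (mul_pos hp hK).le
    have h3 := hKM p hp hp1
    have h0 : 0 < (1 / 2) * Kreal μ p / Real.sqrt (p * Kreal μ p) := by positivity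
    have h4 : ((1 / 2) * Kreal μ p / Real.sqrt (p * Kreal μ p)) ^ 2 ≤ B ^ 2 :=
      pow_le_pow_left₀ h0.le h1 2
    have h5 : ((1 / 2) * Kreal μ p / Real.sqrt (p * Kreal μ p)) ^ 2 = Kreal μ p / (4 * p) := by
      rw [div_pow, Real.sq_sqrt (mul_pos hp hK).le]
      field_simp
      norm_num
    rw [h5, div_le_iff₀ (by positivity)] at h4
    linarith
  have hB2 : 0 ≤ B ^ 2 := sq_nonneg B
  have h1 := hlow 1 one_pos le_rfl
  have hBpos : 0 < B ^ 2 := by linarith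
  have h2 := hlow (M / (8 * B ^ 2)) (by positivity) (by
    rw [div_le_one (by positivity)]; linarith)
  have e : 4 * B ^ 2 * (M / (8 * B ^ 2)) = M / 2 := by
    have := hBpos.ne'
    generalize B ^ 2 = y at this
    field_simp
    norm_num
  linarith
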